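/- For every 0 < ε < 1 there exists C > 0 such that, for p ≥ C log n / n, the binomial random graph G = G_{n,p} asymptotically almost surely satisfies the following: for every H ∈ H^ε_{n,p}(G), the graph G' := G ∖ H satisfies property RE(1/2 + ε/4). -/

import Mathlib

/-!
Write `K = G \ H`.  The proof is a Pósa rotation argument.  Fix a path `P` that cannot be lengthened
in `K ∪ P`, rotate it exhaustively with its last vertex fixed, and let `R` be the set of all first
vertices found, with a chosen path `q x` for each `x ∈ R` (`exists_closed`).  Every `K`-neighbour of
`x ∈ R` lies on `q x`, and its predecessor there is the endpoint of a further rotation.  So the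
`K`-neighbours of `x` are among the at most `|R|` successors along `q x` of vertices of `R`; by
Pósa's observation they also lie in the at most `3|R|` vertices of `R` and its neighbours on `P`
(`hull`).

Two random facts force `|R| ≥ (1/2 + ε/4) n` (`large_of_closed`).  Small sets in `G` are sparse,
while `K` has minimum degree of order `εnp`, so the containment in `hull P R` makes `|R|` linear.
For linear `|R|`, let `X ⊆ R` consist of the vertices of `R` outside the first `|R| - εn/72`
places of the Pósa ordering.  Their `K`-degrees are at least about
`(min (|R|, n/2) + (7/8 - 1/72) εn) p`, while the pairs `(x, y)`, `x ∈ X`, with `y` a successor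
along `q x` of a vertex of `R` number at most `|X||R|` and so carry at most about `|X||R|p` edges of
`G`.  Hence `|R|` exceeds `n/2` by the required margin.

The last edge count has to hold for all systems `q` simultaneously.  The path `q x` is determined by
`x` and the path it was rotated from, so a whole system is encoded by `P` and a parent for each
endpoint; there are only `exp (O (n log n))` systems (`card_rotFam`), and a Chernoff bound
(`Pr_adjCount_le`) with failure probability `exp (-c n² p)` survives the union bound when
`np ≥ C log n` (`Pr_BadFam_le`).

A connected component of `K` is closed in the same sense, so it contains more than half of the
vertices and `K` is connected.  Rotating once more from the other end of each `q x` gives the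
sets `T_x` (`RE_of_good`).
-/

open Filter Real

namespace Resilience

variable {V : Type*}

/-- The degree of a vertex, as the cardinality of its neighbourhood. -/
noncomputable def deg (G : SimpleGraph V) (v : V) : ℕ := (G.neighborSet v).ncard

/-- The neighbourhood of a set of vertices: all vertices with a neighbour in `X`. -/
def nbhd (G : SimpleGraph V) (X : Set V) : Set V := {v | ∃ x ∈ X, G.Adj v x}

/-- The minimum degree over a set of vertices. -/
noncomputable def minDeg (G : SimpleGraph V) (X : Set V) : ℕ :=
  sInf ((fun v => deg G v) '' X)

/-- The number of edges of `G` with one endpoint in `X` and the other in `Y`. -/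
noncomputable def eBetween (G : SimpleGraph V) (X Y : Set V) : ℕ :=
  {e ∈ G.edgeSet | ∃ x ∈ X, ∃ y ∈ Y, e = s(x, y)}.ncard

/-- The number of edges of `G` with both endpoints in `A`. -/
noncomputable def eIn (G : SimpleGraph V) (A : Set V) : ℕ :=
  {e ∈ G.edgeSet | ∀ v ∈ e, v ∈ A}.ncard

/-- The graph on `V` whose edges are the consecutive pairs of the list `l`;
this lets us view a path, recorded as a list of distinct vertices, as a graph. -/
def listGraph (l : List V) : SimpleGraph V :=
  SimpleGraph.fromEdgeSet {e | ∃ q ∈ l.zip l.tail, e = s(q.1, q.2)}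

/-- `l` is a (nonempty) path on `V` all of whose edges lie in `G`. -/
def IsPathOn (G : SimpleGraph V) (l : List V) : Prop :=
  l ≠ [] ∧ l.Nodup ∧ l.Chain' G.Adj

/-- `l` is a longest path with all edges in `G`. -/
def IsLongestPathOn (G : SimpleGraph V) (l : List V) : Prop :=
  IsPathOn G l ∧ ∀ l' : List V, IsPathOn G l' → l'.length ≤ l.length

/-- `l'` is obtained from the path `l` (with fixed last endpoint) by a single rotation
within `G`, whose broken edge lies on the original path `P`.  Writing
`l = a :: t₁ ++ c :: b :: t₂`, the pivot is `b`, the new edge is `ab ∈ G`, the broken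
edge is `cb` (an edge of `P`), and the rotated path is `(a :: t₁ ++ [c]).reverse ++ b :: t₂`. -/
def IsRotation (G : SimpleGraph V) (P l l' : List V) : Prop :=
  ∃ (a c b : V) (t₁ t₂ : List V),
    l = a :: t₁ ++ c :: b :: t₂ ∧ G.Adj a b ∧ (listGraph P).Adj c b ∧
    l' = (a :: t₁ ++ [c]).reverse ++ b :: t₂

/-- The set of paths obtainable from `P` by at most `t` successive rotations within `G`
with fixed last endpoint, all broken edges lying on `P`. -/
def rotSet (G : SimpleGraph V) (P : List V) : ℕ → Set (List V)
  | 0 => {P}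
  | t + 1 => rotSet G P t ∪ {l' | ∃ l ∈ rotSet G P t, IsRotation G P l l'}

/-- `R^t_{G,P,u}`: the set of endpoints of paths obtainable from `P` by at most `t`
successive rotations within `G` with fixed last endpoint. -/
def Rset (G : SimpleGraph V) (P : List V) (t : ℕ) : Set V :=
  {x | ∃ l ∈ rotSet G P t, l.head? = some x}

/-- The family `H^ε_{n,p}` of Pósa-type subgraphs: there is an ordering of the vertices
with non-increasing degrees such that `d_H(v_i) ≤ (n-i)p - εnp` for all `i < n/2`
(1-based indexing). -/
def PosaFamily (n : ℕ) (p ε : ℝ) (H : SimpleGraph (Fin n)) : Prop :=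
  ∃ v : Fin n → Fin n, Function.Bijective v ∧
    (∀ i j : Fin n, i ≤ j → deg H (v j) ≤ deg H (v i)) ∧
    ∀ i : Fin n, ((i.1 : ℝ) + 1) < n / 2 →
      (deg H (v i) : ℝ) ≤ ((n : ℝ) - ((i.1 : ℝ) + 1)) * p - ε * n * p

/-- The family `H^{ε,δ}_{n,p}` of (shifted) Chvátal-type subgraphs, where the shift
`δn` is recorded as a natural number `s`: there is an ordering of the vertices with
non-increasing degrees such that for all `i < n/2` (1-based indexing), either
`d_H(v_i) ≤ (n-i)p - εnp` or `d_H(v_{n-i-s}) ≤ ip - εnp`. -/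
def ChvatalFamily (n : ℕ) (p ε : ℝ) (s : ℕ) (H : SimpleGraph (Fin n)) : Prop :=
  ∃ v : Fin n → Fin n, Function.Bijective v ∧
    (∀ i j : Fin n, i ≤ j → deg H (v j) ≤ deg H (v i)) ∧
    ∀ i : Fin n, ((i.1 : ℝ) + 1) < n / 2 →
      ((deg H (v i) : ℝ) ≤ ((n : ℝ) - ((i.1 : ℝ) + 1)) * p - ε * n * p ∨
       (deg H (v ⟨n - (i.1 + 1) - s - 1, by have := i.2; omega⟩) : ℝ) ≤
         ((i.1 : ℝ) + 1) * p - ε * n * p)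

/-- The probability weight of a fixed graph `G` in the binomial random graph `G_{n,p}`. -/
noncomputable def weight (n : ℕ) (p : ℝ) (G : SimpleGraph (Fin n)) : ℝ :=
  p ^ G.edgeSet.ncard * (1 - p) ^ (n.choose 2 - G.edgeSet.ncard)

open Classical in
/-- The probability that the binomial random graph `G_{n,p}` satisfies the property `Q`. -/
noncomputable def Pr (n : ℕ) (p : ℝ) (Q : SimpleGraph (Fin n) → Prop) : ℝ :=
  ∑ G : SimpleGraph (Fin n), if Q G then weight n p G else 0

/-- Property `RE(δ)` for a (connected) graph `G` on `n` vertices: for every path `P`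
on the vertex set, either `G ∪ P` has a longer path, or there are at least `δn` vertices
`v`, each with a set `T v` of at least `δn` vertices `w`, such that `G ∪ P` has a path
from `v` to `w` with the same vertex set as `P`. -/
def RE (n : ℕ) (δ : ℝ) (G : SimpleGraph (Fin n)) : Prop :=
  G.Connected ∧
  ∀ P : List (Fin n), P ≠ [] → P.Nodup →
    (∃ Q : List (Fin n), IsPathOn (G ⊔ listGraph P) Q ∧ P.length < Q.length) ∨
    (∃ S : Set (Fin n), δ * n ≤ S.ncard ∧
      ∃ T : Fin n → Set (Fin n), (∀ v ∈ S, δ * n ≤ (T v).ncard) ∧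
        ∀ v ∈ S, ∀ w ∈ T v, ∃ Q : List (Fin n),
          IsPathOn (G ⊔ listGraph P) Q ∧ Q.head? = some v ∧ Q.getLast? = some w ∧
          Q.toFinset = P.toFinset)

/-- `G₂` complements `G₁` (with respect to parameter `δ` as in `RE(δ)`): for every path
`P` on the vertex set, either `G₁ ∪ P` has a longer path, or there are sets `S`, `T v`
as in the definition of `RE(δ)` together with `v ∈ S` and `w ∈ T v` such that `vw` is an
edge of `G₁ ∪ G₂`. -/
def Complements (n : ℕ) (δ : ℝ) (G₁ G₂ : SimpleGraph (Fin n)) : Prop :=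
  ∀ P : List (Fin n), P ≠ [] → P.Nodup →
    (∃ Q : List (Fin n), IsPathOn (G₁ ⊔ listGraph P) Q ∧ P.length < Q.length) ∨
    (∃ S : Set (Fin n), δ * n ≤ S.ncard ∧
      ∃ T : Fin n → Set (Fin n), (∀ v ∈ S, δ * n ≤ (T v).ncard) ∧
        (∀ v ∈ S, ∀ w ∈ T v, ∃ Q : List (Fin n),
          IsPathOn (G₁ ⊔ listGraph P) Q ∧ Q.head? = some v ∧ Q.getLast? = some w ∧
          Q.toFinset = P.toFinset) ∧
        ∃ v ∈ S, ∃ w ∈ T v, (G₁ ⊔ G₂).Adj v w)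



/-! ### Rotations of paths -/

lemma notMem_left_of_nodup {A B : List V} {z : V} (h : (A ++ z :: B).Nodup) : z ∉ A := by
  intro hz
  exact (List.nodup_append.1 h).2.2 z hz z (by simp) rfl

/-- Rotation keeps a path a path, for any symmetric adjacency relation `r`. -/
lemma isChain_rot {r : V → V → Prop} (hr : ∀ a b, r a b → r b a) {A B : List V} {x z y : V}
    (hc : (A ++ z :: y :: B).IsChain r) (hx : (A ++ z :: y :: B).head? = some x)
    (hxy : r x y) : (z :: A.reverse ++ y :: B).IsChain r := by
  have e : z :: A.reverse ++ y :: B = (A ++ [z]).reverse ++ y :: B := by simp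
  rw [List.isChain_append_cons_cons] at hc
  rw [e, List.isChain_append]
  refine ⟨?_, hc.2.2, ?_⟩
  · rw [List.isChain_reverse]
    exact hc.1.imp (fun a b h => hr _ _ h)
  · intro a ha b hb
    have hb' : y = b := by simpa using hb
    subst hb'
    have : a = x := by
      rw [List.getLast?_reverse] at ha
      cases A <;> simp_all
    subst this
    exact hxy

lemma isChain_listGraph {P : List V} (hP : P.Nodup) : P.IsChain (listGraph P).Adj := by
  rw [List.isChain_iff_forall_rel_of_append_cons_cons]
  intro a b A B h
  unfold listGraph
  rw [SimpleGraph.fromEdgeSet_adj]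
  refine ⟨⟨(a, b), ?_, rfl⟩, ?_⟩
  · rw [h]
    clear h
    induction A with
    | nil => simp
    | cons c A ih =>
      cases A with
      | nil => simp
      | cons d A => simp at ih ⊢; tauto
  · rintro rfl
    rw [h] at hP
    have := (List.nodup_append.1 hP).2.1
    simp at this

section Rotation

variable [DecidableEq V]

/-- The successor of `z` on the path `l`; the junk value is `z` itself when `z` is the last vertex
of `l` or does not occur in `l`. -/
def sc (l : List V) (z : V) : V := l.getD (l.idxOf z + 1) z

/-- The path obtained from `l` by a rotation with fixed last vertex and new first vertex `z`: the
initial segment of `l` ending in `z` is reversed. -/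
def rot (l : List V) (z : V) : List V :=
  (l.take (l.idxOf z + 1)).reverse ++ l.drop (l.idxOf z + 1)

lemma sc_append {A B : List V} {z y : V} (hz : z ∉ A) : sc (A ++ z :: y :: B) z = y := by
  unfold sc
  have : (A ++ z :: y :: B).idxOf z = A.length := by
    rw [List.idxOf_append_of_notMem hz]; simp
  rw [this]; simp

lemma rot_append {A B : List V} {z : V} (hz : z ∉ A) :
    rot (A ++ z :: B) z = z :: A.reverse ++ B := by
  unfold rot
  have : (A ++ z :: B).idxOf z = A.length := by
    rw [List.idxOf_append_of_notMem hz]; simp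
  rw [this]
  have h1 : A.take (A.length + 1) = A := List.take_of_length_le (by omega)
  have h2 : A.drop (A.length + 1) = [] := List.drop_of_length_le (by omega)
  simp [List.take_append, List.drop_append, h1, h2]

/-- `u` and `v` are each other's neighbours along the path `P`. -/
def PEdge (P : List V) (u v : V) : Prop :=
  (v = sc P u ∨ v = sc P.reverse u) ∧ (u = sc P v ∨ u = sc P.reverse v)

lemma isChain_PEdge {P : List V} (hP : P.Nodup) : P.IsChain (PEdge P) := by
  rw [List.isChain_iff_forall_rel_of_append_cons_cons]
  intro a b A B h
  have h1 : sc P a = b := by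
    rw [h]; exact sc_append (notMem_left_of_nodup (h ▸ hP))
  have hr : P.reverse = B.reverse ++ b :: a :: A.reverse := by rw [h]; simp
  have h2 : sc P.reverse b = a := by
    rw [hr]; exact sc_append (notMem_left_of_nodup (hr ▸ List.nodup_reverse.2 hP))
  exact ⟨Or.inl h1.symm, Or.inr h2.symm⟩

/-- The vertices of `R` together with their neighbours along the path `P`. -/
def hull (P : List V) (R : Finset V) : Finset V :=
  R ∪ R.image (sc P) ∪ R.image (sc P.reverse)

lemma subset_hull (P : List V) (R : Finset V) : R ⊆ hull P R := by
  intro x hx; simp [hull, hx]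

lemma card_hull (P : List V) (R : Finset V) : (hull P R).card ≤ 3 * R.card := by
  unfold hull
  have h1 := Finset.card_union_le (R ∪ R.image (sc P)) (R.image (sc P.reverse))
  have h2 := Finset.card_union_le R (R.image (sc P))
  have h3 := Finset.card_image_le (s := R) (f := sc P)
  have h4 := Finset.card_image_le (s := R) (f := sc P.reverse)
  omega

lemma hull_mono (P : List V) {R R' : Finset V} (h : R ⊆ R') : hull P R ⊆ hull P R' := by
  unfold hull
  gcongr

lemma mem_hull_of_PEdge {P : List V} {R : Finset V} {u v : V} (hu : u ∈ R) (h : PEdge P u v) :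
    v ∈ hull P R := by
  rcases h.1 with h | h
  · simp only [hull, Finset.mem_union, Finset.mem_image]
    exact Or.inl (Or.inr ⟨u, hu, h.symm⟩)
  · simp only [hull, Finset.mem_union, Finset.mem_image]
    exact Or.inr ⟨u, hu, h.symm⟩

/-- Edges that are either edges of `P` or lie inside `hull P R`. -/
def HEdge (P : List V) (R : Finset V) (u v : V) : Prop :=
  PEdge P u v ∨ (u ∈ hull P R ∧ v ∈ hull P R)

lemma HEdge.symm {P : List V} {R : Finset V} {u v : V} (h : HEdge P R u v) : HEdge P R v u :=
  h.imp And.symm And.symm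

lemma HEdge.mono {P : List V} {R R' : Finset V} (hR : R ⊆ R') {u v : V} (h : HEdge P R u v) :
    HEdge P R' u v :=
  h.imp id (fun h => ⟨hull_mono P hR h.1, hull_mono P hR h.2⟩)

lemma HEdge.mem_hull {P : List V} {R : Finset V} {u v : V} (h : HEdge P R u v) (hu : u ∈ R) :
    v ∈ hull P R :=
  h.elim (mem_hull_of_PEdge hu) And.right

/-- A partial record of Pósa rotations: for each `x` in the set `R` of endpoints found so far, `q x`
is a path of `K ∪ P` from `x` to the last vertex of `P` on the vertex set of `P`.  The field
`hedge` carries Pósa's observation that every edge of `q x` off `P` stays inside `hull P R`. -/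
structure RotSystem (K : SimpleGraph V) (P : List V) (R : Finset V) (q : V → List V) : Prop where
  head : ∀ x ∈ R, (q x).head? = some x
  last : ∀ x ∈ R, (q x).getLast? = P.getLast?
  perm : ∀ x ∈ R, (q x).Perm P
  chain : ∀ x ∈ R, (q x).IsChain (K ⊔ listGraph P).Adj
  hedge : ∀ x ∈ R, (q x).IsChain (HEdge P R)

/-- If `P` is not extendable in `K ∪ P`, every `K`-neighbour of an endpoint `x ∈ R` is an inner
vertex or the last vertex of `q x`, hence the pivot of a rotation. -/
lemma RotSystem.split {K : SimpleGraph V} {P : List V} {R : Finset V} {q : V → List V}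
    (hs : RotSystem K P R q) (hP : P.Nodup)
    (hmax : ∀ Q, IsPathOn (K ⊔ listGraph P) Q → Q.length ≤ P.length)
    {x y : V} (hx : x ∈ R) (hxy : K.Adj x y) :
    ∃ A z B, q x = A ++ z :: y :: B ∧ (q x).Nodup := by
  have hnd : (q x).Nodup := (hs.perm x hx).nodup_iff.2 hP
  obtain ⟨t, ht⟩ : ∃ t, q x = x :: t := by
    have := hs.head x hx
    cases h : q x with
    | nil => simp [h] at this
    | cons a t => simp [h] at this; exact ⟨t, by rw [this]⟩
  have hy : y ∈ q x := by
    by_contra hy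
    have hl := hmax (y :: q x) ⟨by simp, List.nodup_cons.2 ⟨hy, hnd⟩, by
      show List.IsChain _ _
      have hc := hs.chain x hx
      rw [ht] at hc ⊢
      rw [List.isChain_cons_cons]
      exact ⟨Or.inl hxy.symm, hc⟩⟩
    have := (hs.perm x hx).length_eq
    simp at hl; omega
  obtain ⟨A, B, hAB⟩ := List.append_of_mem hy
  rcases List.eq_nil_or_concat A with rfl | ⟨A', z, rfl⟩
  · rw [ht] at hAB
    simp at hAB
    exact absurd hAB.1 hxy.ne
  · exact ⟨A', z, B, by rw [hAB]; simp, hnd⟩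

/-- One further rotation enlarges the system. -/
lemma RotSystem.extend {K : SimpleGraph V} {P : List V} {R : Finset V} {q : V → List V}
    (hs : RotSystem K P R q) {x y z : V} {A B : List V} (hx : x ∈ R) (hxy : K.Adj x y)
    (hq : q x = A ++ z :: y :: B) (hnd : (q x).Nodup) (hz : z ∉ R) :
    RotSystem K P (insert z R) (Function.update q z (rot (q x) z)) := by
  have hzA : z ∉ A := notMem_left_of_nodup (hq ▸ hnd)
  have hrot : rot (q x) z = z :: A.reverse ++ y :: B := by rw [hq, rot_append hzA]
  have hsub : R ⊆ insert z R := Finset.subset_insert z R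
  -- old endpoints keep their paths, so each field only has to be checked at `z`
  have key : ∀ (Φ : V → List V → Prop), Φ z (z :: A.reverse ++ y :: B) → (∀ a ∈ R, Φ a (q a)) →
      ∀ a ∈ insert z R, Φ a (Function.update q z (rot (q x) z) a) := by
    intro Φ h1 h2 a ha
    by_cases h : a = z
    · subst h; rw [Function.update_self, hrot]; exact h1
    · rw [Function.update_of_ne h]
      exact h2 a ((Finset.mem_insert.1 ha).resolve_left h)
  refine ⟨key (fun a l => l.head? = some a) (by simp) hs.head,
    key (fun a l => l.getLast? = P.getLast?) ?_ hs.last,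
    key (fun a l => l.Perm P) ?_ hs.perm,
    key (fun a l => l.IsChain (K ⊔ listGraph P).Adj) ?_ hs.chain,
    key (fun a l => l.IsChain (HEdge P (insert z R))) ?_
      (fun a ha => (hs.hedge a ha).imp (fun _ _ h => h.mono hsub))⟩
  · rw [← hs.last x hx, hq]
    simp [List.getLast?_append, List.getLast?_cons]
  · refine List.Perm.trans ?_ (hs.perm x hx)
    rw [hq]
    have e : A ++ z :: y :: B = (A ++ [z]) ++ y :: B := by simp
    have e' : z :: A.reverse ++ y :: B = (A ++ [z]).reverse ++ y :: B := by simp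
    rw [e, e']
    exact (List.reverse_perm _).append_right _
  · exact isChain_rot (fun a b h => h.symm) (hq ▸ hs.chain x hx) (hq ▸ hs.head x hx) (Or.inl hxy)
  · have hc : (A ++ z :: y :: B).IsChain (HEdge P (insert z R)) := by
      rw [← hq]; exact (hs.hedge x hx).imp (fun _ _ h => h.mono hsub)
    refine isChain_rot (fun a b h => h.symm) hc (hq ▸ hs.head x hx) (Or.inr ⟨?_, ?_⟩)
    · exact subset_hull _ _ (hsub hx)
    · rw [List.isChain_append_cons_cons] at hc
      exact hc.2.1.mem_hull (Finset.mem_insert_self z R)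

/-- All systems of paths that arise from a family `A₀` of systems by at most `m` successive
steps "let the path at `x` be the rotation of the path at `a` with new endpoint `x`". -/
def rotFam [Fintype V] (A₀ : Finset (V → List V)) : ℕ → Finset (V → List V)
  | 0 => A₀
  | m + 1 => rotFam A₀ m ∪
      (rotFam A₀ m ×ˢ (Finset.univ : Finset (V × V))).image
        (fun t => Function.update t.1 t.2.2 (rot (t.1 t.2.1) t.2.2))

lemma rotFam_mono [Fintype V] (A₀ : Finset (V → List V)) : Monotone (rotFam A₀) :=
  monotone_nat_of_le_succ (fun _ => Finset.subset_union_left)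

/-- A whole system of rotated paths costs only `O(log n)` bits per endpoint. -/
lemma card_rotFam [Fintype V] (A₀ : Finset (V → List V)) (m : ℕ) :
    (rotFam A₀ m).card ≤ A₀.card * (1 + Fintype.card V ^ 2) ^ m := by
  induction m with
  | zero => simp [rotFam]
  | succ m ih =>
    calc (rotFam A₀ (m + 1)).card
        ≤ (rotFam A₀ m).card + (rotFam A₀ m).card * Fintype.card V ^ 2 := by
          refine (Finset.card_union_le _ _).trans ?_
          gcongr
          refine Finset.card_image_le.trans ?_
          simp [Finset.card_product, sq]
      _ = (rotFam A₀ m).card * (1 + Fintype.card V ^ 2) := by ring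
      _ ≤ A₀.card * (1 + Fintype.card V ^ 2) ^ m * (1 + Fintype.card V ^ 2) := by gcongr
      _ = _ := by ring

/-- Exhaustive rotation yields a system closed under rotations. -/
lemma exists_closed_aux [Fintype V] {K : SimpleGraph V} {P : List V} (hP : P.Nodup)
    {A₀ : Finset (V → List V)} (k : ℕ) : ∀ (R : Finset V) (q : V → List V),
      R.card + k = Fintype.card V → RotSystem K P R q → R.Nonempty →
      q ∈ rotFam A₀ R.card →
      ∃ (R : Finset V) (q : V → List V), RotSystem K P R q ∧ R.Nonempty ∧
        q ∈ rotFam A₀ (Fintype.card V) ∧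
        ∀ x ∈ R, ∀ y, K.Adj x y → ∀ A z B, q x = A ++ z :: y :: B → z ∈ R := by
  induction k with
  | zero =>
    intro R q hk hs hR hq
    refine ⟨R, q, hs, hR, by rwa [← hk], ?_⟩
    intro x hx y hxy A z B hqx
    rw [(Finset.card_eq_iff_eq_univ R).1 (by omega)]
    exact Finset.mem_univ z
  | succ k ih =>
    intro R q hk hs hR hq
    by_cases hcl : ∀ x ∈ R, ∀ y, K.Adj x y → ∀ A z B, q x = A ++ z :: y :: B → z ∈ R
    · exact ⟨R, q, hs, hR, rotFam_mono A₀ (by omega) hq, hcl⟩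
    · push Not at hcl
      obtain ⟨x, hx, y, hxy, A, z, B, hqx, hz⟩ := hcl
      have hnd : (q x).Nodup := (hs.perm x hx).nodup_iff.2 hP
      have hc : (insert z R).card = R.card + 1 := Finset.card_insert_of_notMem hz
      refine ih (insert z R) (Function.update q z (rot (q x) z)) (by omega)
        (hs.extend hx hxy hqx hnd hz) (Finset.insert_nonempty z R) ?_
      rw [hc]
      refine Finset.mem_union_right _ (Finset.mem_image.2 ⟨(q, x, z), ?_, rfl⟩)
      simp [hq]

/-- Pósa's rotation lemma in the form used here: in a closed system the `K`-neighbours of `x ∈ R`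
are successors, along `q x`, of vertices of `R`, and they lie in `hull P R`. -/
lemma exists_closed [Fintype V] {K : SimpleGraph V} {P : List V} (hP : P.Nodup) (hne : P ≠ [])
    (hmax : ∀ Q, IsPathOn (K ⊔ listGraph P) Q → Q.length ≤ P.length)
    {A₀ : Finset (V → List V)} (hA₀ : (fun _ => P) ∈ A₀) :
    ∃ (R : Finset V) (q : V → List V), RotSystem K P R q ∧ R.Nonempty ∧
      q ∈ rotFam A₀ (Fintype.card V) ∧
      ∀ x ∈ R, ∀ y, K.Adj x y → y ∈ R.image (sc (q x)) ∧ y ∈ hull P R := by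
  obtain ⟨a, t, rfl⟩ := List.exists_cons_of_ne_nil hne
  have hcard : 0 < Fintype.card V := Fintype.card_pos_iff.2 ⟨a⟩
  have hs : RotSystem K (a :: t) {a} (fun _ => a :: t) := by
    refine ⟨by simp, by simp, by simp, ?_, ?_⟩
    · exact fun _ _ => (isChain_listGraph hP).imp (fun _ _ h => Or.inr h)
    · exact fun _ _ => (isChain_PEdge hP).imp (fun _ _ h => Or.inl h)
  obtain ⟨R, q, hs, hR, hq, hcl⟩ := exists_closed_aux hP (A₀ := A₀)
    (Fintype.card V - 1) {a} (fun _ => a :: t) (by simp; omega) hs (by simp)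
    (rotFam_mono A₀ (Nat.zero_le _) hA₀)
  refine ⟨R, q, hs, hR, hq, fun x hx y hxy => ?_⟩
  obtain ⟨A, z, B, hqx, hnd⟩ := hs.split hP hmax hx hxy
  have hz := hcl x hx y hxy A z B hqx
  constructor
  · refine Finset.mem_image.2 ⟨z, hz, ?_⟩
    rw [hqx]
    exact sc_append (notMem_left_of_nodup (hqx ▸ hnd))
  · have hc := hs.hedge x hx
    rw [hqx, List.isChain_append_cons_cons] at hc
    exact hc.2.1.mem_hull hz

end Rotation

/-! ### Exponential moments of the binomial random graph -/

section Probability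

open Classical

variable {n : ℕ} {p : ℝ}

lemma weight_nonneg (h0 : 0 ≤ p) (h1 : p ≤ 1) (G : SimpleGraph (Fin n)) : 0 ≤ weight n p G := by
  unfold weight
  have : 0 ≤ 1 - p := by linarith
  positivity

/-- The exponential moment of a linear function of the edge indicators factorises. -/
lemma sum_weight_mul (f : Sym2 (Fin n) → ℝ) :
    ∑ G : SimpleGraph (Fin n), weight n p G * ∏ e ∈ G.edgeFinset, f e
      = ∏ e ∈ (⊤ : SimpleGraph (Fin n)).edgeFinset, (p * f e + (1 - p)) := by
  rw [Finset.prod_add]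
  refine Finset.sum_bij' (fun G _ => G.edgeFinset)
    (fun s _ => SimpleGraph.fromEdgeSet (s : Set (Sym2 (Fin n)))) ?_ ?_ ?_ ?_ ?_
  · intro G _
    rw [Finset.mem_powerset]
    exact SimpleGraph.edgeFinset_mono le_top
  · intro s _; exact Finset.mem_univ _
  · intro G _; simp
  · intro s hs
    rw [Finset.mem_powerset] at hs
    ext e
    have := @hs e
    simp only [SimpleGraph.mem_edgeFinset, SimpleGraph.edgeSet_fromEdgeSet, Set.mem_sdiff,
      Finset.mem_coe, SimpleGraph.edgeSet_top] at this ⊢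
    constructor
    · exact fun h => h.1
    · exact fun h => ⟨h, by simpa using this h⟩
  · intro G _
    have hsub : G.edgeFinset ⊆ (⊤ : SimpleGraph (Fin n)).edgeFinset :=
      SimpleGraph.edgeFinset_mono le_top
    have hc : G.edgeSet.ncard = G.edgeFinset.card := by
      rw [← SimpleGraph.coe_edgeFinset, Set.ncard_coe_finset]
    rw [Finset.prod_mul_distrib, Finset.prod_const, Finset.prod_const,
      Finset.card_sdiff_of_subset hsub, weight, hc,
      SimpleGraph.card_edgeFinset_top_eq_card_choose_two, Fintype.card_fin]
    ring

lemma sum_weight : ∑ G : SimpleGraph (Fin n), weight n p G = 1 := by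
  have := sum_weight_mul (n := n) (p := p) (fun _ => 1)
  simpa using this

lemma Pr_nonneg (h0 : 0 ≤ p) (h1 : p ≤ 1) (Q : SimpleGraph (Fin n) → Prop) : 0 ≤ Pr n p Q := by
  unfold Pr
  refine Finset.sum_nonneg fun G _ => ?_
  split_ifs
  · exact weight_nonneg h0 h1 G
  · exact le_rfl

lemma Pr_mono (h0 : 0 ≤ p) (h1 : p ≤ 1) {Q Q' : SimpleGraph (Fin n) → Prop}
    (h : ∀ G, Q G → Q' G) : Pr n p Q ≤ Pr n p Q' := by
  unfold Pr
  refine Finset.sum_le_sum fun G _ => ?_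
  have := weight_nonneg h0 h1 G
  by_cases hQ : Q G
  · simp [hQ, h G hQ]
  · simp only [hQ, if_false]; split_ifs <;> simp [this]

/-- Union bound. -/
lemma Pr_exists_le (h0 : 0 ≤ p) (h1 : p ≤ 1) {ι : Type*} (s : Finset ι)
    (Q : ι → SimpleGraph (Fin n) → Prop) :
    Pr n p (fun G => ∃ i ∈ s, Q i G) ≤ ∑ i ∈ s, Pr n p (Q i) := by
  unfold Pr
  rw [Finset.sum_comm]
  refine Finset.sum_le_sum fun G _ => ?_
  have hw := weight_nonneg h0 h1 G
  split_ifs with h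
  · obtain ⟨i, hi, hQ⟩ := h
    calc weight n p G = if Q i G then weight n p G else 0 := by simp [hQ]
      _ ≤ _ := Finset.single_le_sum (f := fun i => if Q i G then weight n p G else 0)
        (fun j _ => by split_ifs <;> simp [hw]) hi
  · exact Finset.sum_nonneg fun j _ => by split_ifs <;> simp [hw]

/-- If `Q` holds outside three exceptional events, its probability is controlled by theirs. -/
lemma one_sub_le_Pr (h0 : 0 ≤ p) (h1 : p ≤ 1) {Q B₁ B₂ B₃ : SimpleGraph (Fin n) → Prop}
    (h : ∀ G, ¬ B₁ G → ¬ B₂ G → ¬ B₃ G → Q G) :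
    1 - (Pr n p B₁ + Pr n p B₂ + Pr n p B₃) ≤ Pr n p Q := by
  have : (1 : ℝ) ≤ Pr n p B₁ + Pr n p B₂ + Pr n p B₃ + Pr n p Q := by
    rw [← sum_weight (n := n) (p := p)]
    unfold Pr
    rw [← Finset.sum_add_distrib, ← Finset.sum_add_distrib, ← Finset.sum_add_distrib]
    refine Finset.sum_le_sum fun G _ => ?_
    have hw := weight_nonneg h0 h1 G
    have := h G
    by_cases b1 : B₁ G <;> by_cases b2 : B₂ G <;> by_cases b3 : B₃ G <;> by_cases q : Q G <;>
      (simp_all; try linarith)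
  linarith

/-- Exponential Markov inequality for a linear function of the edge indicators. -/
lemma Pr_linear_le (h0 : 0 ≤ p) (h1 : p ≤ 1) (a : Sym2 (Fin n) → ℝ) (m : ℝ) :
    Pr n p (fun G => m ≤ ∑ e ∈ G.edgeFinset, a e)
      ≤ exp (-m + p * ∑ e ∈ (⊤ : SimpleGraph (Fin n)).edgeFinset, (exp (a e) - 1)) := by
  calc Pr n p (fun G => m ≤ ∑ e ∈ G.edgeFinset, a e)
      ≤ ∑ G : SimpleGraph (Fin n), exp (-m) * (weight n p G * ∏ e ∈ G.edgeFinset, exp (a e)) := by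
        unfold Pr
        refine Finset.sum_le_sum fun G _ => ?_
        have hw := weight_nonneg h0 h1 G
        split_ifs with h
        · rw [← Real.exp_sum, mul_left_comm, ← Real.exp_add]
          have : 1 ≤ exp (-m + ∑ e ∈ G.edgeFinset, a e) := Real.one_le_exp (by linarith)
          nlinarith
        · positivity
    _ = exp (-m) * ∏ e ∈ (⊤ : SimpleGraph (Fin n)).edgeFinset, (p * exp (a e) + (1 - p)) := by
        rw [← Finset.mul_sum, sum_weight_mul]
    _ ≤ exp (-m) * ∏ e ∈ (⊤ : SimpleGraph (Fin n)).edgeFinset, exp (p * (exp (a e) - 1)) := by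
        have hp : 0 ≤ 1 - p := by linarith
        gcongr with e _
        · have := Real.add_one_le_exp (p * (exp (a e) - 1))
          linarith
    _ = _ := by rw [← Real.exp_sum, ← Real.exp_add, Finset.mul_sum]

/-- The number of pairs in `T` that are adjacent in `G`. -/
noncomputable def adjCount (G : SimpleGraph (Fin n)) (T : Finset (Fin n × Fin n)) : ℕ :=
  (T.filter (fun t => G.Adj t.1 t.2)).card

lemma adjCount_eq_sum (G : SimpleGraph (Fin n)) (T : Finset (Fin n × Fin n)) :
    adjCount G T = ∑ e ∈ G.edgeFinset, (T.filter (fun t => s(t.1, t.2) = e)).card := by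
  unfold adjCount
  rw [Finset.card_eq_sum_card_fiberwise (f := fun t : Fin n × Fin n => s(t.1, t.2))
    (t := G.edgeFinset)]
  · refine Finset.sum_congr rfl fun e he => ?_
    congr 1
    ext t
    simp only [Finset.mem_filter]
    constructor
    · rintro ⟨⟨h1, _⟩, h2⟩; exact ⟨h1, h2⟩
    · rintro ⟨h1, h2⟩
      refine ⟨⟨h1, ?_⟩, h2⟩
      rw [← h2, SimpleGraph.mem_edgeFinset, SimpleGraph.mem_edgeSet] at he
      exact he
  · intro t ht
    simpa using (Finset.mem_filter.1 ht).2

lemma card_fiber_le (T : Finset (Fin n × Fin n)) (e : Sym2 (Fin n)) :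
    (T.filter (fun t => s(t.1, t.2) = e)).card ≤ 2 := by
  induction e using Sym2.ind with
  | _ x y =>
    refine (Finset.card_le_card (t := {(x, y), (y, x)}) ?_).trans Finset.card_le_two
    rintro ⟨a, b⟩ ht
    have := (Finset.mem_filter.1 ht).2
    simpa using this

/-- Chernoff-type bound, giving the upper tail for `l > 0` and the lower tail for `l < 0`.  The
term `2 * l ^ 2` takes into account that an edge may be counted twice in `T`. -/
lemma Pr_adjCount_le (h0 : 0 ≤ p) (h1 : p ≤ 1) (T : Finset (Fin n × Fin n))
    (hT : ∀ t ∈ T, t.1 ≠ t.2) (l m : ℝ) (hl : |l| ≤ 1 / 2) :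
    Pr n p (fun G => l * m ≤ l * adjCount G T)
      ≤ exp (-(l * m) + p * ((l + 2 * l ^ 2) * T.card)) := by
  set c : Sym2 (Fin n) → ℕ := fun e => (T.filter (fun t => s(t.1, t.2) = e)).card with hc
  have hsum : (T.card : ℝ) = ∑ e ∈ (⊤ : SimpleGraph (Fin n)).edgeFinset, (c e : ℝ) := by
    have h := adjCount_eq_sum (⊤ : SimpleGraph (Fin n)) T
    have h' : adjCount (⊤ : SimpleGraph (Fin n)) T = T.card := by
      unfold adjCount
      congr 1
      ext t
      simpa using hT t
    rw [h'] at h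
    rw [h]
    push_cast
    refine Finset.sum_congr ?_ fun _ _ => rfl
    ext e; simp
  have hG : ∀ G : SimpleGraph (Fin n),
      l * adjCount G T = ∑ e ∈ G.edgeFinset, l * (c e : ℝ) := by
    intro G
    rw [adjCount_eq_sum, ← Finset.mul_sum]
    push_cast
    rfl
  simp_rw [hG]
  refine (Pr_linear_le h0 h1 (fun e => l * (c e : ℝ)) (l * m)).trans ?_
  rw [Real.exp_le_exp, hsum, Finset.mul_sum (a := l + 2 * l ^ 2)]
  gcongr with e _
  have hc2 : (c e : ℝ) ≤ 2 := by exact_mod_cast card_fiber_le T e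
  have hc0 : (0 : ℝ) ≤ c e := Nat.cast_nonneg _
  have habs : |l * (c e : ℝ)| ≤ 1 := by
    rw [abs_mul, abs_of_nonneg hc0]
    nlinarith [abs_nonneg l]
  have := (abs_le.1 (Real.abs_exp_sub_one_sub_id_le habs)).2
  nlinarith [mul_nonneg (mul_nonneg hc0 (sub_nonneg.2 hc2)) (sq_nonneg l)]

end Probability

/-! ### Three unlikely events -/

section Events

open Classical

variable {n : ℕ} {p : ℝ}

/-- The constant systems `x ↦ P`, where `P` ranges over lists of length at most `n`; this includes
all paths and the empty list. -/
noncomputable def baseFam (n : ℕ) : Finset (Fin n → List (Fin n)) :=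
  (Finset.univ : Finset ((Fin n → Fin n) × Fin (n + 1))).image
    (fun t _ => (List.ofFn t.1).take t.2)

lemma card_baseFam (n : ℕ) : (baseFam n).card ≤ n ^ n * (n + 1) := by
  refine Finset.card_image_le.trans ?_
  simp

lemma mem_baseFam {P : List (Fin n)} (hP : P.Nodup) : (fun _ => P) ∈ baseFam n := by
  have hlen : P.length ≤ n := by simpa using hP.length_le_card
  refine Finset.mem_image.2 ?_
  cases P with
  | nil => exact ⟨(id, 0), Finset.mem_univ _, by simp⟩
  | cons a t =>
    refine ⟨(fun i => (a :: t).getD i a, ⟨(a :: t).length, by omega⟩), Finset.mem_univ _, ?_⟩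
    funext _
    apply List.ext_getElem
    · simpa using hlen
    · intro i h1 h2
      simp [List.getElem?_eq_getElem h2]

/-- All systems of rotated paths on `Fin n`, for all starting paths. -/
noncomputable def fam (n : ℕ) : Finset (Fin n → List (Fin n)) := rotFam (baseFam n) n

lemma card_fam (n : ℕ) : (fam n).card ≤ n ^ n * (n + 1) * (1 + n ^ 2) ^ n := by
  refine (card_rotFam _ _).trans ?_
  rw [Fintype.card_fin]
  gcongr
  exact card_baseFam n

/-- The pairs `(x, y)` with `x ∈ X` for which `y` follows a vertex of `R` on the path `q x`. -/
noncomputable def famPairs (q : Fin n → List (Fin n)) (X R : Finset (Fin n)) :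
    Finset (Fin n × Fin n) :=
  (X.biUnion fun x => (R.image (sc (q x))).image (fun y => (x, y))).filter (fun t => t.1 ≠ t.2)

lemma card_famPairs (q : Fin n → List (Fin n)) (X R : Finset (Fin n)) :
    (famPairs q X R).card ≤ X.card * R.card := by
  refine (Finset.card_filter_le _ _).trans (Finset.card_biUnion_le.trans ?_)
  rw [← smul_eq_mul]
  refine Finset.sum_le_card_nsmul _ _ _ fun x _ => ?_
  exact Finset.card_image_le.trans Finset.card_image_le

/-- Some vertex has degree noticeably below `np`. -/
def BadDeg (n : ℕ) (p g : ℝ) (G : SimpleGraph (Fin n)) : Prop :=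
  ∃ v ∈ (Finset.univ : Finset (Fin n)),
    (adjCount G ({v} ×ˢ Finset.univ.erase v) : ℝ) ≤ (1 - g) * (n * p)

/-- Some small set of vertices is too dense. -/
def BadSparse (n : ℕ) (p c : ℝ) (G : SimpleGraph (Fin n)) : Prop :=
  ∃ W ∈ (Finset.univ : Finset (Finset (Fin n))).filter
      (fun W => W.Nonempty ∧ (W.card : ℝ) ≤ c / 4 * n),
    c * (n * p) * W.card ≤ (adjCount G W.offDiag : ℝ)

/-- Some pair set built from a system of rotated paths carries too many edges. -/
def BadFam (n : ℕ) (p g : ℝ) (G : SimpleGraph (Fin n)) : Prop :=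
  ∃ t ∈ fam n ×ˢ (Finset.univ : Finset (Finset (Fin n) × Finset (Fin n))),
    p * (t.2.1.card * t.2.2.card) + g * (n * (n * p)) ≤ (adjCount G (famPairs t.1 t.2.1 t.2.2) : ℝ)

lemma Pr_BadDeg_le (h0 : 0 ≤ p) (h1 : p ≤ 1) (hn : 3 ≤ n) {g : ℝ} (hg0 : 0 < g) (hg1 : g ≤ 1)
    (hp : 3 * Real.log n ≤ g ^ 2 / 8 * (n * p)) :
    Pr n p (BadDeg n p g) ≤ exp (-Real.log n) := by
  have hn' : (3 : ℝ) ≤ n := by exact_mod_cast hn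
  have hL : 1 ≤ Real.log n := by
    rw [Real.le_log_iff_exp_le (by linarith)]
    linarith [Real.exp_one_lt_d9]
  have key : ∀ v ∈ (Finset.univ : Finset (Fin n)),
      Pr n p (fun G => (adjCount G ({v} ×ˢ Finset.univ.erase v) : ℝ) ≤ (1 - g) * (n * p))
        ≤ exp (1 - 3 * Real.log n) := by
    intro v _
    have hT : ∀ t ∈ ({v} ×ˢ Finset.univ.erase v : Finset (Fin n × Fin n)), t.1 ≠ t.2 := by
      rintro ⟨a, b⟩ ht
      simp only [Finset.mem_product, Finset.mem_singleton, Finset.mem_erase] at ht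
      intro h
      exact ht.2.1 (h.symm.trans ht.1)
    have hc : (({v} ×ˢ Finset.univ.erase v : Finset (Fin n × Fin n)).card : ℝ) = n - 1 := by
      rw [Finset.card_product, Finset.card_erase_of_mem (Finset.mem_univ v)]
      simp
      rw [Nat.cast_sub (by omega)]
      simp
    refine (Pr_mono h0 h1 ?_).trans ((Pr_adjCount_le h0 h1 _ hT (-(g / 4)) ((1 - g) * (n * p))
      (by rw [abs_neg, abs_of_pos (by positivity)]; linarith)).trans ?_)
    · intro G hG
      nlinarith
    · rw [hc, Real.exp_le_exp]
      nlinarith [mul_nonneg h0 hg0.le, mul_nonneg h0 (sq_nonneg g), mul_le_mul h1 hg1 hg0.le (by norm_num)]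
  refine (Pr_exists_le h0 h1 _ _).trans ((Finset.sum_le_sum key).trans ?_)
  rw [Finset.sum_const, Finset.card_univ, Fintype.card_fin, nsmul_eq_mul]
  nth_rewrite 1 [← Real.exp_log (show (0 : ℝ) < n by linarith)]
  rw [← Real.exp_add, Real.exp_le_exp]
  linarith

lemma Pr_BadSparse_le (h0 : 0 ≤ p) (h1 : p ≤ 1) (hn : 3 ≤ n) {c : ℝ}
    (hp : 3 * Real.log n ≤ c / 4 * (n * p)) :
    Pr n p (BadSparse n p c) ≤ exp (-Real.log n) := by
  have hn' : (3 : ℝ) ≤ n := by exact_mod_cast hn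
  have hL : 1 ≤ Real.log n := by
    rw [Real.le_log_iff_exp_le (by linarith)]
    linarith [Real.exp_one_lt_d9]
  set x : ℝ := exp (-(3 * Real.log n)) with hx
  have hx0 : 0 < x := Real.exp_pos _
  have key : ∀ W ∈ (Finset.univ : Finset (Finset (Fin n))).filter
      (fun W => W.Nonempty ∧ (W.card : ℝ) ≤ c / 4 * n),
      Pr n p (fun G => c * (n * p) * W.card ≤ (adjCount G W.offDiag : ℝ)) ≤ x ^ W.card := by
    intro W hW
    have hWc := (Finset.mem_filter.1 hW).2.2
    refine (Pr_mono h0 h1 ?_).trans ((Pr_adjCount_le h0 h1 W.offDiag ?_ (1 / 2)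
      (c * (n * p) * W.card) (by norm_num [abs_of_pos])).trans ?_)
    · intro G hG
      linarith
    · rintro ⟨a, b⟩ ht
      exact (Finset.mem_offDiag.1 ht).2.2
    · rw [hx, ← Real.exp_nat_mul, Real.exp_le_exp]
      have hcard : (W.offDiag.card : ℝ) ≤ W.card * W.card := by
        rw [Finset.offDiag_card]
        exact_mod_cast Nat.sub_le _ _
      have hw : (0 : ℝ) ≤ W.card := Nat.cast_nonneg _
      have e1 : p * W.offDiag.card ≤ p * (W.card * (c / 4 * n)) := by gcongr; nlinarith
      nlinarith
  refine (Pr_exists_le h0 h1 _ _).trans ((Finset.sum_le_sum key).trans ?_)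
  have hsum : ∑ W ∈ (Finset.univ : Finset (Finset (Fin n))).filter
      (fun W => W.Nonempty ∧ (W.card : ℝ) ≤ c / 4 * n), x ^ W.card ≤ (x + 1) ^ n - 1 := by
    have hall : ∑ W : Finset (Fin n), x ^ W.card = (x + 1) ^ n := by
      have := Fintype.sum_pow_mul_eq_add_pow (Fin n) x 1
      simpa using this
    have : ∑ W ∈ (Finset.univ : Finset (Finset (Fin n))).erase ∅, x ^ W.card = (x + 1) ^ n - 1 := by
      rw [← hall, ← Finset.add_sum_erase _ _ (Finset.mem_univ (∅ : Finset (Fin n)))]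
      simp
    rw [← this]
    refine Finset.sum_le_sum_of_subset_of_nonneg ?_ (fun _ _ _ => by positivity)
    intro W hW
    have := (Finset.mem_filter.1 hW).2.1
    exact Finset.mem_erase.2 ⟨this.ne_empty, Finset.mem_univ _⟩
  refine hsum.trans ?_
  have hnx : n * x = exp (-(2 * Real.log n)) := by
    rw [hx]
    nth_rewrite 1 [← Real.exp_log (show (0 : ℝ) < n by linarith)]
    rw [← Real.exp_add]; congr 1; ring
  have hpow : (x + 1) ^ n ≤ exp (n * x) := by
    rw [Real.exp_nat_mul]
    exact pow_le_pow_left₀ (by positivity) (Real.add_one_le_exp x) n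
  set y := exp (-Real.log n) with hy
  have hy0 : 0 < y := Real.exp_pos _
  have hnx' : n * x = y ^ 2 := by
    rw [hnx, hy, ← Real.exp_nat_mul]; congr 1; push_cast; ring
  have hyle : y ≤ 1 / 2 := by
    rw [hy, Real.exp_neg, Real.exp_log (by linarith), inv_le_comm₀ (by linarith) (by norm_num)]
    linarith
  have hb := (abs_le.1 (Real.abs_exp_sub_one_sub_id_le (x := y ^ 2)
    (by rw [abs_of_nonneg (by positivity)]; nlinarith))).2
  rw [hnx'] at hpow
  nlinarith [mul_pos hy0 hy0, mul_pos (mul_pos hy0 hy0) hy0]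

lemma Pr_BadFam_le (h0 : 0 ≤ p) (h1 : p ≤ 1) (hn : 3 ≤ n) {g : ℝ} (hg0 : 0 < g) (hg1 : g ≤ 1)
    (hp : 9 * Real.log n ≤ g ^ 2 / 8 * (n * p)) :
    Pr n p (BadFam n p g) ≤ exp (-Real.log n) := by
  have hn' : (3 : ℝ) ≤ n := by exact_mod_cast hn
  have hn0 : (0 : ℝ) < n := by linarith
  have hL : 1 ≤ Real.log n := by
    rw [Real.le_log_iff_exp_le (by linarith)]
    linarith [Real.exp_one_lt_d9]
  have key : ∀ t ∈ fam n ×ˢ (Finset.univ : Finset (Finset (Fin n) × Finset (Fin n))),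
      Pr n p (fun G => p * (t.2.1.card * t.2.2.card) + g * (n * (n * p))
        ≤ (adjCount G (famPairs t.1 t.2.1 t.2.2) : ℝ)) ≤ exp (-(9 * (n * Real.log n))) := by
    rintro ⟨q, X, R⟩ _
    simp only
    refine (Pr_mono h0 h1 ?_).trans ((Pr_adjCount_le h0 h1 (famPairs q X R) ?_ (g / 4)
      (p * (X.card * R.card) + g * (n * (n * p)))
      (by rw [abs_of_pos (by positivity)]; linarith)).trans ?_)
    · intro G hG
      exact mul_le_mul_of_nonneg_left hG (by positivity)
    · intro t ht
      exact (Finset.mem_filter.1 ht).2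
    · rw [Real.exp_le_exp]
      have hX : (X.card : ℝ) ≤ n := by exact_mod_cast card_finset_fin_le X
      have hR : (R.card : ℝ) ≤ n := by exact_mod_cast card_finset_fin_le R
      have hXR : (X.card : ℝ) * R.card ≤ n * n := by gcongr
      have hc : ((famPairs q X R).card : ℝ) ≤ X.card * R.card := by
        exact_mod_cast card_famPairs q X R
      have e1 : p * ((g / 4 + 2 * (g / 4) ^ 2) * (famPairs q X R).card)
          ≤ p * ((g / 4 + 2 * (g / 4) ^ 2) * (X.card * R.card)) := by gcongr
      have e2 : p * (2 * (g / 4) ^ 2 * (X.card * R.card)) ≤ p * (2 * (g / 4) ^ 2 * (n * n)) := by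
        gcongr
      have e3 := mul_le_mul_of_nonneg_left hp hn0.le
      nlinarith
  refine (Pr_exists_le h0 h1 _ _).trans ((Finset.sum_le_sum key).trans ?_)
  rw [Finset.sum_const, nsmul_eq_mul, Finset.card_product]
  have hexp : ∀ k : ℕ, exp (k * Real.log n) = (n : ℝ) ^ k := by
    intro k; rw [Real.exp_nat_mul, Real.exp_log hn0]
  have hcount : (((fam n).card *
      (Finset.univ : Finset (Finset (Fin n) × Finset (Fin n))).card : ℕ) : ℝ)
        ≤ exp ((6 * n + 2 : ℕ) * Real.log n) := by
    rw [hexp]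
    have : (fam n).card * (Finset.univ : Finset (Finset (Fin n) × Finset (Fin n))).card
        ≤ n ^ (6 * n + 2) := by
      rw [Finset.card_univ, Fintype.card_prod, Fintype.card_finset, Fintype.card_fin]
      calc (fam n).card * (2 ^ n * 2 ^ n)
          ≤ (n ^ n * (n + 1) * (1 + n ^ 2) ^ n) * (n ^ n * n ^ n) := by
            have : 2 ≤ n := by omega
            gcongr
            exact card_fam n
        _ ≤ (n ^ n * n ^ 2 * (n ^ 3) ^ n) * (n ^ n * n ^ n) := by
            gcongr
            · nlinarith
            · nlinarith [sq_nonneg n, Nat.mul_le_mul hn (le_refl (n ^ 2)), Nat.pow_le_pow_left hn 2]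
        _ = n ^ (6 * n + 2) := by ring
    exact_mod_cast this
  calc _ ≤ exp ((6 * n + 2 : ℕ) * Real.log n) * exp (-(9 * (n * Real.log n))) := by gcongr
    _ ≤ exp (-Real.log n) := by
      rw [← Real.exp_add, Real.exp_le_exp]
      push_cast
      nlinarith

end Events

/-! ### The deterministic argument -/

section Deterministic

open Classical

variable {n : ℕ} {p : ℝ}

lemma deg_eq_card (K : SimpleGraph (Fin n)) (x : Fin n) :
    deg K x = (Finset.univ.filter (fun y => K.Adj x y)).card := by
  unfold deg
  rw [← Set.ncard_coe_finset]
  congr 1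
  ext y; simp

lemma deg_le_deg_sdiff_add (G H : SimpleGraph (Fin n)) (x : Fin n) :
    deg G x ≤ deg (G \ H) x + deg H x := by
  unfold deg
  refine (Set.ncard_le_ncard ?_ (Set.toFinite _)).trans (Set.ncard_union_le _ _)
  intro y hy
  by_cases h : H.Adj x y
  · exact Or.inr h
  · exact Or.inl ⟨hy, h⟩

lemma adjCount_star_le (G : SimpleGraph (Fin n)) (v : Fin n) :
    adjCount G ({v} ×ˢ Finset.univ.erase v) ≤ deg G v := by
  rw [deg_eq_card]
  refine Finset.card_le_card_of_injOn Prod.snd ?_ ?_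
  · rintro ⟨a, b⟩ ht
    simp only [Finset.coe_filter, Set.mem_ofPred_eq, Finset.mem_product, Finset.mem_singleton,
      Finset.mem_univ, true_and] at ht ⊢
    rw [← ht.1.1]; exact ht.2
  · rintro ⟨a, b⟩ ht ⟨a', b'⟩ ht' h
    simp only [Finset.coe_filter, Set.mem_ofPred_eq, Finset.mem_product,
      Finset.mem_singleton] at ht ht' h
    rw [ht.1.1, ht'.1.1, h]

lemma sum_deg_le {K G : SimpleGraph (Fin n)} (hKG : K ≤ G) (X : Finset (Fin n))
    (T : Finset (Fin n × Fin n)) (h : ∀ x ∈ X, ∀ y, K.Adj x y → (x, y) ∈ T) :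
    ∑ x ∈ X, deg K x ≤ adjCount G T := by
  simp_rw [deg_eq_card]
  rw [← Finset.card_sigma]
  refine Finset.card_le_card_of_injOn (fun s => (s.1, s.2)) ?_ ?_
  · rintro ⟨a, b⟩ ht
    simp only [Finset.coe_sigma, Set.mem_sigma_iff, Finset.mem_coe, Finset.mem_filter,
      Finset.mem_univ, true_and] at ht
    exact Finset.mem_coe.2 (Finset.mem_filter.2 ⟨h a ht.1 b ht.2, hKG ht.2⟩)
  · rintro ⟨a, b⟩ _ ⟨a', b'⟩ _ h
    simp at h
    rw [h.1, h.2]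

/-- Degrees in `G \ H` along the Pósa ordering. -/
lemma posa_degree {ε : ℝ} {G H : SimpleGraph (Fin n)} (hn : 3 ≤ n) (h0 : 0 ≤ p)
    (hbad : ¬ BadDeg n p (ε / 8) G) {v : Fin n → Fin n}
    (hanti : ∀ i j : Fin n, i ≤ j → deg H (v j) ≤ deg H (v i))
    (hdeg : ∀ i : Fin n, ((i.1 : ℝ) + 1) < n / 2 →
      (deg H (v i) : ℝ) ≤ ((n : ℝ) - ((i.1 : ℝ) + 1)) * p - ε * n * p) (i : Fin n) :
    min ((i.1 : ℝ) + 1) (n / 2 - 1) * p + 7 * ε / 8 * (n * p) ≤ deg (G \ H) (v i) := by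
  have hG : (1 - ε / 8) * (n * p) < deg G (v i) := by
    unfold BadDeg at hbad
    push Not at hbad
    refine (hbad (v i) (Finset.mem_univ _)).trans_le ?_
    exact_mod_cast adjCount_star_le G (v i)
  have hsub : (deg G (v i) : ℝ) ≤ deg (G \ H) (v i) + deg H (v i) := by
    exact_mod_cast deg_le_deg_sdiff_add G H (v i)
  by_cases hi : ((i.1 : ℝ) + 1) < n / 2
  · have h1 := hdeg i hi
    have h2 : min ((i.1 : ℝ) + 1) (n / 2 - 1) * p ≤ ((i.1 : ℝ) + 1) * p := by
      gcongr; exact min_le_left _ _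
    nlinarith
  · -- compare with the last index `(n - 3) / 2` to which the hypothesis on `H` applies
    have hj : (n - 3) / 2 < n := by omega
    set j : Fin n := ⟨(n - 3) / 2, hj⟩ with hjdef
    have hj1 : 2 * ((n - 3) / 2 + 1) < n := by omega
    have hj2 : n ≤ 2 * ((n - 3) / 2 + 1) + 2 := by omega
    have hj1' : 2 * ((j.1 : ℝ) + 1) < n := by exact_mod_cast hj1
    have hj2' : (n : ℝ) ≤ 2 * ((j.1 : ℝ) + 1) + 2 := by exact_mod_cast hj2
    have hji : j ≤ i := by
      rw [Fin.le_def]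
      have : (j.1 : ℝ) ≤ i.1 := by linarith
      exact_mod_cast this
    have h1 := hdeg j (by linarith)
    have h3 : (deg H (v i) : ℝ) ≤ deg H (v j) := by exact_mod_cast hanti j i hji
    have h2 : min ((i.1 : ℝ) + 1) (n / 2 - 1) * p ≤ ((j.1 : ℝ) + 1) * p := by
      gcongr; exact (min_le_right _ _).trans (by linarith)
    nlinarith

/-- A set `R` that is closed in the sense of the last hypothesis contains more than half of the
vertices: sparsity of small sets makes `R` linear in size, and then the vertices of `R` of largest
degree in `G \ H` send out too many edges unless `R` is large. -/
lemma large_of_closed {ε : ℝ} (hε : 0 < ε) (hε1 : ε < 1) {G H : SimpleGraph (Fin n)} (hn : 3 ≤ n)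
    (hnε : 8 ≤ ε * n) (h0 : 0 < p) (hH : PosaFamily n p ε H)
    (hb1 : ¬ BadDeg n p (ε / 8) G) (hb2 : ¬ BadSparse n p (ε / 6) G)
    (hb3 : ¬ BadFam n p (ε ^ 2 / 576) G)
    {R W : Finset (Fin n)} {q : Fin n → List (Fin n)} (hR : R.Nonempty) (hq : q ∈ fam n)
    (hRW : R ⊆ W) (hW : W.card ≤ 3 * R.card)
    (hcl : ∀ x ∈ R, ∀ y, (G \ H).Adj x y → y ∈ R.image (sc (q x)) ∧ y ∈ W) :
    (1 / 2 + ε / 4) * n ≤ R.card := by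
  obtain ⟨v, hbij, hanti, hdeg⟩ := hH
  have hd := posa_degree hn h0.le hb1 hanti hdeg
  have hn' : (3 : ℝ) ≤ n := by exact_mod_cast hn
  have hn0 : (0 : ℝ) < n := by linarith
  have hnp : 0 < n * p := by positivity
  have hle : G \ H ≤ G := sdiff_le
  have hW' : (W.card : ℝ) ≤ 3 * R.card := by exact_mod_cast hW
  have hR0 : (0 : ℝ) < R.card := by exact_mod_cast hR.card_pos
  have hlin : ε / 72 * n < R.card := by
    by_contra hsmall
    push Not at hsmall
    have hmin : ∀ x ∈ R, ε / 2 * (n * p) ≤ (deg (G \ H) x : ℝ) := by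
      intro x _
      obtain ⟨i, rfl⟩ := hbij.2 x
      refine le_trans ?_ (hd i)
      have : 0 ≤ min ((i.1 : ℝ) + 1) (n / 2 - 1) := le_min (by positivity) (by linarith)
      have := mul_nonneg this h0.le
      nlinarith
    have h1 : R.card * (ε / 2 * (n * p)) ≤ ∑ x ∈ R, (deg (G \ H) x : ℝ) := by
      rw [← nsmul_eq_mul]; exact Finset.card_nsmul_le_sum _ _ _ hmin
    have h2 : ∑ x ∈ R, (deg (G \ H) x : ℝ) ≤ adjCount G W.offDiag := by
      exact_mod_cast sum_deg_le hle R W.offDiag (fun x hx y hxy =>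
        Finset.mem_offDiag.2 ⟨hRW hx, (hcl x hx y hxy).2, hxy.ne⟩)
    unfold BadSparse at hb2
    push Not at hb2
    have h3 := hb2 W (Finset.mem_filter.2 ⟨Finset.mem_univ _, hR.mono hRW, by linarith⟩)
    have h4 : ε / 6 * (n * p) * W.card ≤ ε / 6 * (n * p) * (3 * R.card) := by gcongr
    nlinarith
  -- `X` consists of the vertices of `R` outside the first `k` places of the ordering
  set k : ℕ := ⌊(R.card : ℝ) - ε / 72 * n⌋₊ with hk
  have hk1 : (k : ℝ) ≤ R.card - ε / 72 * n := Nat.floor_le (by linarith)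
  have hk2 : (R.card : ℝ) - ε / 72 * n < k + 1 := Nat.lt_floor_add_one _
  set Y : Finset (Fin n) := (Finset.univ.filter (fun i : Fin n => i.1 < k)).image v with hY
  have hYc : Y.card ≤ k := by
    refine Finset.card_image_le.trans ?_
    refine (Finset.card_le_card_of_injOn (t := Finset.range k) (fun i : Fin n => i.1) ?_ ?_).trans
      (by simp)
    · intro i hi; simpa using hi
    · intro i _ j _ h; exact Fin.ext h
  set X := R \ Y with hX
  have hXc : ε / 72 * n ≤ X.card := by
    have h1 : R.card ≤ X.card + Y.card := by
      have := Finset.le_card_sdiff Y R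
      rw [← hX] at this
      omega
    have h2 : (R.card : ℝ) ≤ X.card + k := by exact_mod_cast h1.trans (by omega)
    linarith
  have hX0 : (0 : ℝ) < X.card := lt_of_lt_of_le (by positivity) hXc
  have hXdeg : ∀ x ∈ X, min (R.card - ε / 72 * n) (n / 2 - 1) * p + 7 * ε / 8 * (n * p)
      ≤ (deg (G \ H) x : ℝ) := by
    intro x hx
    obtain ⟨i, rfl⟩ := hbij.2 x
    have hi : k ≤ i.1 := by
      by_contra hi
      exact (Finset.mem_sdiff.1 hx).2
        (Finset.mem_image.2 ⟨i, Finset.mem_filter.2 ⟨Finset.mem_univ _, by omega⟩, rfl⟩)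
    have hi' : (k : ℝ) ≤ i.1 := by exact_mod_cast hi
    refine le_trans ?_ (hd i)
    gcongr
    linarith
  have h1 : X.card * (min (R.card - ε / 72 * n) (n / 2 - 1) * p + 7 * ε / 8 * (n * p))
      ≤ ∑ x ∈ X, (deg (G \ H) x : ℝ) := by
    rw [← nsmul_eq_mul]; exact Finset.card_nsmul_le_sum _ _ _ hXdeg
  have h2 : ∑ x ∈ X, (deg (G \ H) x : ℝ) ≤ adjCount G (famPairs q X R) := by
    have := sum_deg_le hle X (famPairs q X R) (fun x hx y hxy => ?_)
    · exact_mod_cast this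
    refine Finset.mem_filter.2 ⟨Finset.mem_biUnion.2 ⟨x, hx, Finset.mem_image.2 ⟨y, ?_, rfl⟩⟩,
      hxy.ne⟩
    exact (hcl x (Finset.mem_sdiff.1 hx).1 y hxy).1
  unfold BadFam at hb3
  push Not at hb3
  have h3 := hb3 (q, X, R) (by simp [hq])
  simp only at h3
  have h4 : ε ^ 2 / 576 * (n * (n * p)) ≤ X.card * (ε / 8 * (n * p)) := by
    have : ε ^ 2 / 576 * (n * (n * p)) = (ε / 72 * n) * (ε / 8 * (n * p)) := by ring
    rw [this]
    gcongr
  have h5 : X.card * (p * (min (R.card - ε / 72 * n) (n / 2 - 1) + 7 * ε / 8 * n))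
      < X.card * (p * (R.card + ε / 8 * n)) := by nlinarith
  have h6 := lt_of_mul_lt_mul_left (lt_of_mul_lt_mul_left h5 hX0.le) h0.le
  rcases min_cases ((R.card : ℝ) - ε / 72 * n) (n / 2 - 1) with ⟨h, _⟩ | ⟨h, _⟩
  · rw [h] at h6
    nlinarith
  · rw [h] at h6
    nlinarith

/-- Every connected component is closed (take `q` constantly the empty list, so that `sc (q x)` is
the identity), hence contains more than half of the vertices. -/
lemma connected_of_good {ε : ℝ} (hε : 0 < ε) (hε1 : ε < 1) {G H : SimpleGraph (Fin n)}
    (hn : 3 ≤ n) (hnε : 8 ≤ ε * n) (h0 : 0 < p) (hH : PosaFamily n p ε H)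
    (hb1 : ¬ BadDeg n p (ε / 8) G) (hb2 : ¬ BadSparse n p (ε / 6) G)
    (hb3 : ¬ BadFam n p (ε ^ 2 / 576) G) : (G \ H).Connected := by
  have : Nonempty (Fin n) := ⟨⟨0, by omega⟩⟩
  have hn' : (3 : ℝ) ≤ n := by exact_mod_cast hn
  have hbig : ∀ a : Fin n, (1 / 2 + ε / 4) * n ≤
      ((Finset.univ.filter (fun y => (G \ H).Reachable a y)).card : ℝ) := by
    intro a
    set R := Finset.univ.filter (fun y => (G \ H).Reachable a y) with hR
    refine large_of_closed (W := R) (q := fun _ => []) hε hε1 hn hnε h0 hH hb1 hb2 hb3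
      ⟨a, by simp [hR]⟩ (rotFam_mono _ (Nat.zero_le n) (mem_baseFam List.nodup_nil))
      subset_rfl (by omega) ?_
    intro x hx y hxy
    have hy : y ∈ R := by
      simp only [hR, Finset.mem_filter, Finset.mem_univ, true_and] at hx ⊢
      exact hx.trans hxy.reachable
    exact ⟨Finset.mem_image.2 ⟨y, hy, by simp [sc]⟩, hy⟩
  refine SimpleGraph.Connected.mk fun a b => ?_
  by_contra hab
  have hdisj : Disjoint (Finset.univ.filter (fun y => (G \ H).Reachable a y))
      (Finset.univ.filter (fun y => (G \ H).Reachable b y)) := by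
    rw [Finset.disjoint_left]
    intro y h1 h2
    simp only [Finset.mem_filter, Finset.mem_univ, true_and] at h1 h2
    exact hab (h1.trans h2.symm)
  have hc := card_finset_fin_le ((Finset.univ.filter (fun y => (G \ H).Reachable a y)) ∪
      (Finset.univ.filter (fun y => (G \ H).Reachable b y)))
  rw [Finset.card_union_of_disjoint hdisj] at hc
  have hc' : ((Finset.univ.filter (fun y => (G \ H).Reachable a y)).card : ℝ) +
      (Finset.univ.filter (fun y => (G \ H).Reachable b y)).card ≤ n := by exact_mod_cast hc
  nlinarith [hbig a, hbig b]

/-- One round of rotations: unless `P` can be lengthened, more than half of the vertices are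
endpoints of paths on the vertex set of `P` with the same last vertex as `P`. -/
lemma exists_endpoints {ε : ℝ} (hε : 0 < ε) (hε1 : ε < 1) {G H : SimpleGraph (Fin n)}
    (hn : 3 ≤ n) (hnε : 8 ≤ ε * n) (h0 : 0 < p) (hH : PosaFamily n p ε H)
    (hb1 : ¬ BadDeg n p (ε / 8) G) (hb2 : ¬ BadSparse n p (ε / 6) G)
    (hb3 : ¬ BadFam n p (ε ^ 2 / 576) G) {P : List (Fin n)} (hne : P ≠ []) (hP : P.Nodup)
    (hmax : ∀ Q, IsPathOn ((G \ H) ⊔ listGraph P) Q → Q.length ≤ P.length) :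
    ∃ R : Finset (Fin n), (1 / 2 + ε / 4) * n ≤ R.card ∧
      ∀ x ∈ R, ∃ Q, IsPathOn ((G \ H) ⊔ listGraph P) Q ∧ Q.head? = some x ∧
        Q.getLast? = P.getLast? ∧ Q.Perm P := by
  obtain ⟨R, q, hs, hR, hq, hcl⟩ := exists_closed hP hne hmax (mem_baseFam hP)
  rw [Fintype.card_fin] at hq
  refine ⟨R, ?_, fun x hx => ⟨q x, ⟨?_, (hs.perm x hx).nodup_iff.2 hP, hs.chain x hx⟩,
    hs.head x hx, hs.last x hx, hs.perm x hx⟩⟩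
  · refine large_of_closed (W := hull P R) hε hε1 hn hnε h0 hH hb1 hb2 hb3 hR hq
      (subset_hull P R) (card_hull P R) (fun x hx y hxy => ?_)
    convert hcl x hx y hxy
  · intro h
    have := (hs.perm x hx)
    rw [h] at this
    exact hne this.symm.eq_nil

/-- The edges of a path of `K ∪ P` add nothing new to `K ∪ P`. -/
lemma sup_listGraph_le {K : SimpleGraph V} {P Q : List V}
    (hQ : Q.IsChain (K ⊔ listGraph P).Adj) : K ⊔ listGraph Q ≤ K ⊔ listGraph P := by
  refine sup_le le_sup_left ?_
  intro a b hab
  unfold listGraph at hab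
  rw [SimpleGraph.fromEdgeSet_adj] at hab
  obtain ⟨⟨⟨c, d⟩, hcd, he⟩, _⟩ := hab
  have hc : (K ⊔ listGraph P).Adj c d := by
    obtain ⟨i, hi, hcd⟩ := List.mem_iff_getElem.1 hcd
    rw [List.isChain_iff_getElem] at hQ
    simp only [List.getElem_zip, List.getElem_tail, Prod.mk.injEq] at hcd
    have := hQ i (by simp at hi; omega)
    rwa [hcd.1, hcd.2] at this
  rcases Sym2.eq_iff.1 he with ⟨rfl, rfl⟩ | ⟨rfl, rfl⟩
  · exact hc
  · exact hc.symm

lemma RE_of_good {ε : ℝ} (hε : 0 < ε) (hε1 : ε < 1) {G H : SimpleGraph (Fin n)}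
    (hn : 3 ≤ n) (hnε : 8 ≤ ε * n) (h0 : 0 < p) (hH : PosaFamily n p ε H)
    (hb1 : ¬ BadDeg n p (ε / 8) G) (hb2 : ¬ BadSparse n p (ε / 6) G)
    (hb3 : ¬ BadFam n p (ε ^ 2 / 576) G) : RE n (1 / 2 + ε / 4) (G \ H) := by
  refine ⟨connected_of_good hε hε1 hn hnε h0 hH hb1 hb2 hb3, fun P hne hP => ?_⟩
  by_cases hmax : ∀ Q, IsPathOn ((G \ H) ⊔ listGraph P) Q → Q.length ≤ P.length
  swap
  · push Not at hmax
    exact Or.inl hmax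
  right
  obtain ⟨S, hS, hSQ⟩ := exists_endpoints hε hε1 hn hnε h0 hH hb1 hb2 hb3 hne hP hmax
  -- rotate each path from `x ∈ S` once more, now keeping the endpoint `x` fixed
  have hT : ∀ x ∈ S, ∃ T : Finset (Fin n), (1 / 2 + ε / 4) * n ≤ T.card ∧
      ∀ w ∈ T, ∃ Q : List (Fin n), IsPathOn ((G \ H) ⊔ listGraph P) Q ∧ Q.head? = some x ∧
        Q.getLast? = some w ∧ Q.toFinset = P.toFinset := by
    intro x hx
    obtain ⟨Q, ⟨hQne, hQnd, hQc⟩, hQh, _, hQp⟩ := hSQ x hx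
    have hQr : Q.reverse.IsChain ((G \ H) ⊔ listGraph P).Adj := by
      rw [List.isChain_reverse]
      exact List.IsChain.imp (fun a b h => h.symm) hQc
    have hle := sup_listGraph_le hQr
    have hmax' : ∀ Q', IsPathOn ((G \ H) ⊔ listGraph Q.reverse) Q' →
        Q'.length ≤ Q.reverse.length := by
      rintro Q' ⟨h1, h2, h3⟩
      rw [List.length_reverse, hQp.length_eq]
      exact hmax Q' ⟨h1, h2, List.IsChain.imp (fun a b h => hle h) h3⟩
    obtain ⟨T, hT, hTQ⟩ := exists_endpoints hε hε1 hn hnε h0 hH hb1 hb2 hb3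
      (P := Q.reverse) (by simpa using hQne) (List.nodup_reverse.2 hQnd) hmax'
    refine ⟨T, hT, fun w hw => ?_⟩
    obtain ⟨Q', ⟨h1, h2, h3⟩, hh, hl, hp⟩ := hTQ w hw
    refine ⟨Q'.reverse, ⟨by simpa using h1, List.nodup_reverse.2 h2, ?_⟩, ?_, ?_, ?_⟩
    · show List.IsChain _ _
      rw [List.isChain_reverse]
      exact List.IsChain.imp (fun a b h => (hle h).symm) h3
    · rw [List.head?_reverse, hl, List.getLast?_reverse, hQh]
    · rw [List.getLast?_reverse, hh]
    · refine List.toFinset_eq_of_perm _ _ ?_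
      exact (List.reverse_perm Q').trans (hp.trans ((List.reverse_perm Q).trans hQp))
  choose! T hTc hTQ using hT
  refine ⟨(S : Set (Fin n)), by rwa [Set.ncard_coe_finset], fun x => (T x : Set (Fin n)), ?_, ?_⟩
  · intro x hx
    rw [Set.ncard_coe_finset]
    exact hTc x hx
  · intro x hx w hw
    exact hTQ x hx w hw

end Deterministic

/-- Lemma 4.5.  For every `0 < ε < 1` there exists `C > 0` such
that, for `p ≥ C log n / n`, a.a.s. for every `H ∈ H^ε_{n,p}(G)` the graph `G ∖ H`
satisfies property `RE(1/2 + ε/4)`. -/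
theorem resilient_RE (ε : ℝ) (hε : 0 < ε) (hε1 : ε < 1) :
    ∃ C : ℝ, 0 < C ∧ ∀ η : ℝ, 0 < η → ∃ N : ℕ, ∀ n : ℕ, N ≤ n →
      ∀ p : ℝ, C * Real.log n / n ≤ p → p ≤ 1 →
        1 - η ≤ Pr n p (fun G =>
          ∀ H : SimpleGraph (Fin n), H ≤ G → PosaFamily n p ε H →
            RE n (1/2 + ε/4) (G \ H)) := by
  -- `C` makes each of the three union bounds below converge; the last one needs `ε⁻⁴`
  refine ⟨10 ^ 8 / ε ^ 4, by positivity, fun η hη => ?_⟩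
  refine ⟨max 3 (max ⌈8 / ε⌉₊ ⌈3 / η⌉₊), fun n hn p hp hp1 => ?_⟩
  have hn3 : 3 ≤ n := (le_max_left _ _).trans hn
  have hnε : 8 / ε ≤ n :=
    Nat.ceil_le.1 (((le_max_left _ _).trans (le_max_right _ _)).trans hn)
  have hnη : 3 / η ≤ n :=
    Nat.ceil_le.1 (((le_max_right _ _).trans (le_max_right _ _)).trans hn)
  rw [div_le_iff₀ hε] at hnε
  rw [div_le_iff₀ hη] at hnη
  have hn' : (3 : ℝ) ≤ n := by exact_mod_cast hn3
  have hn0 : (0 : ℝ) < n := by linarith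
  have hL : 0 < Real.log n := Real.log_pos (by linarith)
  have h0 : 0 < p := lt_of_lt_of_le (by positivity) hp
  have hnp : 10 ^ 8 * Real.log n ≤ ε ^ 4 * (n * p) := by
    rw [div_le_iff₀ hn0, div_mul_eq_mul_div, div_le_iff₀ (by positivity)] at hp
    linarith
  have hnp0 : 0 < n * p := by positivity
  have e2 : ε ^ 4 * (n * p) ≤ ε ^ 2 * (n * p) := by
    gcongr ?_ * _
    exact pow_le_pow_of_le_one hε.le hε1.le (by norm_num)
  have e1 : ε ^ 4 * (n * p) ≤ ε * (n * p) := by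
    gcongr ?_ * _
    exact pow_le_of_le_one hε.le hε1.le (by norm_num)
  have b1 := Pr_BadDeg_le h0.le hp1 hn3 (g := ε / 8) (by positivity) (by linarith) (by nlinarith)
  have b2 := Pr_BadSparse_le h0.le hp1 hn3 (c := ε / 6) (by nlinarith)
  have b3 := Pr_BadFam_le h0.le hp1 hn3 (g := ε ^ 2 / 576) (by positivity) (by nlinarith)
    (by nlinarith)
  have hexp : exp (-Real.log n) ≤ η / 3 := by
    rw [Real.exp_neg, Real.exp_log hn0, inv_le_comm₀ hn0 (by positivity), inv_div, div_le_iff₀ hη]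
    exact hnη
  refine le_trans ?_ (one_sub_le_Pr h0.le hp1 (B₁ := BadDeg n p (ε / 8))
    (B₂ := BadSparse n p (ε / 6)) (B₃ := BadFam n p (ε ^ 2 / 576)) ?_)
  · linarith
  · intro G hb1 hb2 hb3 H _ hH
    exact RE_of_good hε hε1 hn3 (by linarith) h0 hH hb1 hb2 hb3

end Resilience
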